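/- arXiv:2303.16304 — 3 statements merged into one kernel-verified Lean document; each statement's English description precedes it below -/
import Mathlib

section
/- Let δ ∈ (0, 1/4] and let h : [0, δ] → ℝ be a continuous function with h(0) = 0 and h(δ) = 1. Then there exist a point r̄ ∈ (0, δ) and a function l : [0, δ] → ℝ that is C² on a neighborhood of r̄ such that h − l attains a local minimum at r̄, l'(r̄) ≥ 1/(4δ), and l''(r̄)/(1 + l'(r̄)²) ≥ −2 l'(r̄). -/
/-!
The idea is to slide convex parabolas `r = c + A (y - y₀)²`, with `A = 4δ ≤ 1` and `y₀ ∈ (0, 1/2)`,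
leftwards until they touch the graph of `h`: one maximizes `r - A (h r - y₀)²` over `[0, δ]`.
Since `h` reaches `y₀` before `δ`, with `0` the minimum of the parabola there, a maximum point `r₁`
satisfies `h r₁ ≥ y₀`. If `h r₁ > y₀`, the upper branch
`l r = y₀ + √((r - c) / A)` touches `h` from below at `r₁`, and with `s = h r₁ - y₀` one has
`l' = 1 / (2 A s)` and `l'' = -1 / (4 A² s³)`, so that both inequalities follow from `A ≤ 1` and
`s ≤ 1/2`; the latter holds because `A s² ≤ δ`.

It remains to find `y₀` with `h r₁ > y₀`. If there were none, every `y ∈ (0, 1/2)` would be attained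
by `h` at a maximum point `ρ y` of its own parabola, whence `|ρ y - ρ y'| ≤ A (y - y')²`. Such a `ρ`
has zero derivative and is constant, contradicting `h (ρ y) = y`.
-/

lemma const_of_quadratic_bound {A a b : ℝ} {ρ : ℝ → ℝ}
    (hρ : ∀ y ∈ Set.Ioo a b, ∀ z ∈ Set.Ioo a b, ρ y - ρ z ≤ A * (y - z) ^ 2) :
    ∀ y ∈ Set.Ioo a b, ∀ z ∈ Set.Ioo a b, ρ y = ρ z := by
  have hd : ∀ z ∈ Set.Ioo a b, HasDerivAt ρ 0 z := by
    intro z hz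
    have hO : (fun y => ρ y - ρ z) =O[nhds z] fun y => ‖y - z‖ ^ 2 := by
      refine Asymptotics.IsBigO.of_bound A ?_
      filter_upwards [isOpen_Ioo.mem_nhds hz] with y hy
      have h1 := hρ y hy z hz
      have h2 := hρ z hz y hy
      rw [Real.norm_eq_abs, Real.norm_eq_abs, Real.norm_eq_abs, sq_abs,
        abs_of_nonneg (sq_nonneg (y - z))]
      exact abs_le.2 ⟨by nlinarith, h1⟩
    rw [hasDerivAt_iff_isLittleO]
    simpa using hO.trans_isLittleO (Asymptotics.isLittleO_pow_sub_sub z (by norm_num : 1 < 2))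
  intro y hy z hz
  exact isOpen_Ioo.is_const_of_deriv_eq_zero isPreconnected_Ioo
    (fun x hx => (hd x hx).differentiableAt.differentiableWithinAt)
    (fun x hx => (hd x hx).deriv) hy hz

lemma hasDerivAt_branch {A c y₀ r : ℝ} (hA : 0 < A) (hr : c < r) :
    HasDerivAt (fun r => y₀ + √((r - c) / A)) (1 / (2 * A * √((r - c) / A))) r := by
  have hpos : 0 < (r - c) / A := div_pos (by linarith) hA
  have h1 : HasDerivAt (fun r => (r - c) / A) (1 / A) r :=
    ((hasDerivAt_id r).sub_const c).div_const A
  have h2 := (h1.sqrt hpos.ne').const_add y₀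
  refine h2.congr_deriv ?_
  have := Real.sqrt_pos.2 hpos
  field_simp

lemma hasDerivAt_deriv_branch {A c y₀ r : ℝ} (hA : 0 < A) (hr : c < r) :
    HasDerivAt (deriv fun r => y₀ + √((r - c) / A)) (-1 / (4 * A ^ 2 * √((r - c) / A) ^ 3)) r := by
  have hpos : 0 < (r - c) / A := div_pos (by linarith) hA
  have hs := Real.sqrt_pos.2 hpos
  have hev : deriv (fun r => y₀ + √((r - c) / A)) =ᶠ[nhds r]
      fun r => (2 * A * (0 + √((r - c) / A)))⁻¹ := by
    filter_upwards [lt_mem_nhds hr] with x hx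
    rw [(hasDerivAt_branch hA hx).deriv, one_div, zero_add]
  refine HasDerivAt.congr_of_eventuallyEq ?_ hev
  have h1 := ((hasDerivAt_branch (y₀ := 0) hA hr).const_mul (2 * A)).fun_inv
    (by rw [zero_add]; positivity)
  refine h1.congr_deriv ?_
  rw [zero_add]
  field_simp
  norm_num

/-- Every maximum point lies on the upper branch or at the vertex, since `h` still has to reach
`y₀` to the right of a point where it is below `y₀`. -/
lemma le_of_isMaxOn {δ A y₀ r₁ : ℝ} {h : ℝ → ℝ} (hA : 0 < A)
    (hcont : ContinuousOn h (Set.Icc 0 δ)) (hδ1 : h δ = 1) (hy : y₀ < 1 / 2)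
    (hr : r₁ ∈ Set.Icc 0 δ)
    (hmax : ∀ r ∈ Set.Icc 0 δ, r - A * (h r - y₀) ^ 2 ≤ r₁ - A * (h r₁ - y₀) ^ 2) :
    y₀ ≤ h r₁ := by
  by_contra! hlt
  obtain ⟨x, hx, hxy⟩ := intermediate_value_Icc hr.2
    (hcont.mono (Set.Icc_subset_Icc_left hr.1)) ⟨hlt.le, by linarith⟩
  have h1 := hmax x ⟨hr.1.trans hx.1, hx.2⟩
  rw [hxy] at h1
  have : 0 < A * (h r₁ - y₀) ^ 2 := mul_pos hA (sq_pos_of_neg (by linarith))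
  nlinarith [hx.1]

theorem stmt_0 (δ : ℝ) (hδ : δ ∈ Set.Ioc (0 : ℝ) (1 / 4))
    (h : ℝ → ℝ) (hcont : ContinuousOn h (Set.Icc 0 δ))
    (h0 : h 0 = 0) (hδ1 : h δ = 1) :
    ∃ rbar ∈ Set.Ioo (0 : ℝ) δ, ∃ l : ℝ → ℝ,
      ContDiffAt ℝ 2 l rbar ∧
      IsLocalMinOn (fun r => h r - l r) (Set.Icc 0 δ) rbar ∧
      deriv l rbar ≥ 1 / (4 * δ) ∧
      deriv (deriv l) rbar / (1 + (deriv l rbar) ^ 2) ≥ -2 * deriv l rbar := by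
  obtain ⟨hδ0, hδ4⟩ := hδ
  obtain ⟨A, hA⟩ : ∃ A, A = 4 * δ := ⟨_, rfl⟩
  have hA0 : 0 < A := by linarith
  have hA1 : A ≤ 1 := by linarith
  have hex : ∀ y₀ : ℝ, ∃ r₁ ∈ Set.Icc 0 δ, ∀ r ∈ Set.Icc 0 δ,
      r - A * (h r - y₀) ^ 2 ≤ r₁ - A * (h r₁ - y₀) ^ 2 := fun y₀ =>
    isCompact_Icc.exists_isMaxOn (Set.nonempty_Icc.2 hδ0.le)
      (f := fun r => r - A * (h r - y₀) ^ 2) (by fun_prop)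
  choose ρ hρ hmax using hex
  obtain ⟨y₀, hy₀, hlt⟩ : ∃ y₀ ∈ Set.Ioo (0 : ℝ) (1 / 2), y₀ < h (ρ y₀) := by
    by_contra! hcon
    have heq : ∀ y ∈ Set.Ioo (0 : ℝ) (1 / 2), h (ρ y) = y := fun y hy =>
      le_antisymm (hcon y hy) (le_of_isMaxOn hA0 hcont hδ1 hy.2 (hρ y) (hmax y))
    have hconst := const_of_quadratic_bound (A := A) (ρ := ρ) (a := 0) (b := 1 / 2) (by
      intro y hy z hz
      have := hmax z (ρ y) (hρ y)
      rw [heq y hy, heq z hz] at this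
      nlinarith)
    have h1 : (1 / 8 : ℝ) ∈ Set.Ioo (0 : ℝ) (1 / 2) := by norm_num
    have h2 : (1 / 4 : ℝ) ∈ Set.Ioo (0 : ℝ) (1 / 2) := by norm_num
    have h3 := heq _ h1
    rw [hconst _ h1 _ h2, heq _ h2] at h3
    norm_num at h3
  obtain ⟨r₁, hr₁⟩ : ∃ r₁, r₁ = ρ y₀ := ⟨_, rfl⟩
  have hr := hρ y₀
  have hm := hmax y₀
  rw [← hr₁] at hr hm hlt
  obtain ⟨c, hc⟩ : ∃ c, c = r₁ - A * (h r₁ - y₀) ^ 2 := ⟨_, rfl⟩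
  rw [← hc] at hm
  -- The value at a point where `h = y₀` shows that the maximum `c` is positive.
  have hc0 : 0 < c := by
    obtain ⟨x, hx, hxy⟩ := intermediate_value_Icc hδ0.le hcont
      (show y₀ ∈ Set.Icc (h 0) (h δ) from ⟨by linarith [hy₀.1], by linarith [hy₀.2]⟩)
    have h1 := hm x hx
    have h2 : x ≠ 0 := by
      rintro rfl
      linarith [hy₀.1]
    have h3 : 0 < x := lt_of_le_of_ne hx.1 h2.symm
    rw [hxy] at h1
    nlinarith
  obtain ⟨s, hs⟩ : ∃ s, s = h r₁ - y₀ := ⟨_, rfl⟩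
  have hs0 : 0 < s := by linarith
  rw [← hs] at hc
  have hs2 : s < 1 / 2 := by
    by_contra! hge
    have : A * (1 / 2) ^ 2 ≤ A * s ^ 2 := by gcongr
    nlinarith [hr.2]
  have hrδ : r₁ ≠ δ := by
    rintro rfl
    linarith [hy₀.2]
  have hr0 : r₁ ≠ 0 := by
    rintro rfl
    linarith [hy₀.1]
  have hcr : c < r₁ := by
    have : 0 < A * s ^ 2 := by positivity
    linarith
  have hsq : √((r₁ - c) / A) = s := by
    rw [show (r₁ - c) / A = s ^ 2 by rw [hc]; field_simp; ring, Real.sqrt_sq hs0.le]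
  refine ⟨r₁, ⟨lt_of_le_of_ne hr.1 hr0.symm, lt_of_le_of_ne hr.2 hrδ⟩,
    fun r => y₀ + √((r - c) / A), ?_, ?_, ?_, ?_⟩
  · refine contDiffAt_const.add (ContDiffAt.sqrt (by fun_prop) ?_)
    exact (div_pos (by linarith) hA0).ne'
  · have hev : ∀ᶠ r in nhdsWithin r₁ (Set.Icc 0 δ), y₀ < h r :=
      (hcont r₁ hr).eventually (lt_mem_nhds hlt)
    filter_upwards [hev, self_mem_nhdsWithin] with r hry hrI
    have h1 : √((r - c) / A) ≤ h r - y₀ := by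
      refine Real.sqrt_le_iff.2 ⟨by linarith, ?_⟩
      rw [div_le_iff₀ hA0]
      linarith [hm r hrI]
    simp only [hsq]
    linarith
  · rw [(hasDerivAt_branch hA0 hcr).deriv, hsq, ← hA]
    apply one_div_le_one_div_of_le (by positivity)
    nlinarith
  · rw [(hasDerivAt_deriv_branch hA0 hcr).deriv, (hasDerivAt_branch hA0 hcr).deriv, hsq, ge_iff_le,
      le_div_iff₀ (by positivity)]
    have key : -1 / (4 * A ^ 2 * s ^ 3)
        - -2 * (1 / (2 * A * s)) * (1 + (1 / (2 * A * s)) ^ 2)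
        = (4 * A ^ 2 * s ^ 2 + (1 - A)) / (4 * A ^ 3 * s ^ 3) := by
      field_simp
      ring
    have : 0 ≤ (4 * A ^ 2 * s ^ 2 + (1 - A)) / (4 * A ^ 3 * s ^ 3) :=
      div_nonneg (add_nonneg (by positivity) (by linarith)) (by positivity)
    linarith
end

section
/- Let d > 0, let H : B_{1/4}(0) → ℝ be continuous on the ball B_{1/4}(0) ⊂ ℝ², and let u be a bounded function on B_{1/4}(0)∖{0} that is C² there and satisfies −d div(Du/√(1 + |Du|²)) = H(x) pointwise on B_{1/4}(0)∖{0}. Extend u to the origin by setting u(0) = liminf_{x→0} u(x). Then for every C² function φ such that u − φ attains a local minimum at the origin, one has −d div(Dφ/√(1 + |Dφ|²))(0) ≥ H(0). In other words, the isolated singularity at the origin is removable in the viscosity supersolution sense. -/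
/-!
Suppose `-d div(Dφ/√(1+|Dφ|²))(0) < H(0)`. Subtracting `‖x‖⁴` from `φ` makes the minimum of `u - φ`
strict without changing the operator at `0` (`divg_flux0_perturb`), and by continuity the perturbed
function `f`, raised by any constant, is a strict subsolution of the equation of `u` in a small
punctured disc. Raised by `u(0) - φ(0) + δ`, with `δ` small, it still lies below `u` near the rim
of that disc, while it exceeds `liminf u` at the origin by `δ`.

The contradiction comes from `comparison_punctured`: such an `f` lies below `u` in the whole
punctured disc. There the difference of the two equations is tested against `η ψ(f - u)`, where `ψ`
is a smooth bounded nondecreasing truncation vanishing on `(-∞, 0]` and `η` is a cutoff vanishing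
for `|x| < s`. The term with the gradient of `f - u` has a sign because `p ↦ p/√(1+|p|²)` is
monotone (`mcField_monotone`), and the term with `Dη` is at most `2 ∫ |Dη| = O(s)` because this
field has norm at most one (`norm_mcField_le`). No bound on `Du` near the origin is needed.
Letting `s → 0` shows that `f - u` is nowhere positive.
-/


open Metric Set

/-- The divergence of a vector field on `ℝ²`: the trace of its derivative. -/
noncomputable def divg (F : EuclideanSpace ℝ (Fin 2) → EuclideanSpace ℝ (Fin 2))
    (x : EuclideanSpace ℝ (Fin 2)) : ℝ :=
  LinearMap.trace ℝ (EuclideanSpace ℝ (Fin 2)) (fderiv ℝ F x).toLinearMap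

/-- The vector field `Dφ/√(1 + |Dφ|²)`. -/
noncomputable def flux0 (φ : EuclideanSpace ℝ (Fin 2) → ℝ)
    (y : EuclideanSpace ℝ (Fin 2)) : EuclideanSpace ℝ (Fin 2) :=
  (Real.sqrt (1 + ‖gradient φ y‖ ^ 2))⁻¹ • gradient φ y

open MeasureTheory Filter Topology

/-! ### The mean curvature field -/

/-- The Euclidean plane. -/
abbrev Plane := EuclideanSpace ℝ (Fin 2)

/-- The nonlinearity `p ↦ p / √(1 + |p|²)` of the mean curvature operator. -/
noncomputable def mcField (p : Plane) : Plane := (Real.sqrt (1 + ‖p‖ ^ 2))⁻¹ • p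

lemma flux0_eq (f : Plane → ℝ) : flux0 f = fun y => mcField (gradient f y) := rfl

lemma one_add_sq_pos (p : Plane) : 0 < 1 + ‖p‖ ^ 2 := by positivity

lemma norm_mcField_le (p : Plane) : ‖mcField p‖ ≤ 1 := by
  have h := Real.sqrt_pos.2 (one_add_sq_pos p)
  rw [mcField, norm_smul, norm_inv, Real.norm_of_nonneg h.le, inv_mul_le_iff₀ h, mul_one]
  exact Real.le_sqrt_of_sq_le (by linarith)

/-- Writing `A = √(1 + |p|²)` and `B = √(1 + |q|²)`, the inner product equals
`(A + B) (1 - (1 + p·q) / (A B))`, and `1 + p·q ≤ A B` by Cauchy-Schwarz. -/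
lemma mcField_monotone (p q : Plane) : 0 ≤ inner ℝ (mcField p - mcField q) (p - q) := by
  set A := Real.sqrt (1 + ‖p‖ ^ 2) with hA
  set B := Real.sqrt (1 + ‖q‖ ^ 2) with hB
  have hA0 : 0 < A := Real.sqrt_pos.2 (one_add_sq_pos p)
  have hB0 : 0 < B := Real.sqrt_pos.2 (one_add_sq_pos q)
  have hA2 : A ^ 2 = 1 + ‖p‖ ^ 2 := Real.sq_sqrt (one_add_sq_pos p).le
  have hB2 : B ^ 2 = 1 + ‖q‖ ^ 2 := Real.sq_sqrt (one_add_sq_pos q).le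
  have hcs : inner ℝ p q ≤ ‖p‖ * ‖q‖ := real_inner_le_norm p q
  have hAB : 1 + inner ℝ p q ≤ A * B := by
    have h1 : 1 + ‖p‖ * ‖q‖ ≤ A * B := by
      apply le_of_sq_le_sq _ (by positivity)
      rw [mul_pow, hA2, hB2]
      nlinarith [sq_nonneg (‖p‖ - ‖q‖)]
    linarith
  have key : inner ℝ (mcField p - mcField q) (p - q)
      = (A + B) * (A * B - (1 + inner ℝ p q)) / (A * B) := by
    simp only [mcField, inner_sub_left, inner_sub_right, real_inner_smul_left,
      real_inner_self_eq_norm_sq, real_inner_comm p q, ← hA, ← hB]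
    have e1 : ‖p‖ ^ 2 = A ^ 2 - 1 := by linarith
    have e2 : ‖q‖ ^ 2 = B ^ 2 - 1 := by linarith
    rw [e1, e2]
    field_simp
    ring
  rw [key]
  exact div_nonneg (mul_nonneg (by positivity) (by linarith)) (by positivity)

lemma contDiff_mcField : ContDiff ℝ 1 mcField := by
  unfold mcField
  refine ContDiff.smul (ContDiff.inv (ContDiff.sqrt ?_ fun p => (one_add_sq_pos p).ne')
    fun p => (Real.sqrt_pos.2 (one_add_sq_pos p)).ne') contDiff_id
  exact contDiff_const.add (contDiff_id.norm_sq ℝ)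

lemma contDiffAt_gradient {f : Plane → ℝ} {x : Plane} (hf : ContDiffAt ℝ 2 f x) :
    ContDiffAt ℝ 1 (gradient f) x := by
  have h : ContDiffAt ℝ 1 (fderiv ℝ f) x := hf.fderiv_right (by norm_num)
  exact (InnerProductSpace.toDual ℝ Plane).symm.contDiff.contDiffAt.comp x h

lemma contDiffAt_flux0 {f : Plane → ℝ} {x : Plane} (hf : ContDiffAt ℝ 2 f x) :
    ContDiffAt ℝ 1 (flux0 f) x := by
  rw [flux0_eq]
  exact contDiff_mcField.contDiffAt.comp x (contDiffAt_gradient hf)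

/-! ### Divergence -/

lemma divg_smul {a : Plane → ℝ} {V : Plane → Plane} {x : Plane}
    (ha : DifferentiableAt ℝ a x) (hV : DifferentiableAt ℝ V x) :
    divg (fun y => a y • V y) x = a x * divg V x + fderiv ℝ a x (V x) := by
  unfold divg
  rw [fderiv_fun_smul ha hV]
  have : ((a x • fderiv ℝ V x + (fderiv ℝ a x).smulRight (V x) : Plane →L[ℝ] Plane)).toLinearMap
      = a x • (fderiv ℝ V x).toLinearMap
        + (fderiv ℝ a x).toLinearMap.smulRight (V x) := rfl
  rw [this, map_add, map_smul, LinearMap.trace_smulRight]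
  rfl

lemma divg_sub {V W : Plane → Plane} {x : Plane}
    (hV : DifferentiableAt ℝ V x) (hW : DifferentiableAt ℝ W x) :
    divg (fun y => V y - W y) x = divg V x - divg W x := by
  unfold divg
  rw [fderiv_fun_sub hV hW]
  exact map_sub (LinearMap.trace ℝ Plane) _ _

/-- The trace as a continuous linear functional. -/
noncomputable def traceL : (Plane →L[ℝ] Plane) →L[ℝ] ℝ :=
  LinearMap.toContinuousLinearMap
    ((LinearMap.trace ℝ Plane).comp (ContinuousLinearMap.coeLM ℝ))

lemma divg_eq_traceL (F : Plane → Plane) (x : Plane) : divg F x = traceL (fderiv ℝ F x) := rfl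

lemma continuousAt_divg {F : Plane → Plane} {x : Plane} (hF : ContDiffAt ℝ 1 F x) :
    ContinuousAt (divg F) x := by
  have h : ContDiffAt ℝ 0 (fderiv ℝ F) x := hF.fderiv_right (by norm_num)
  exact traceL.continuous.continuousAt.comp h.continuousAt

lemma integrable_fderiv {F : Plane → Plane} (hF : ContDiff ℝ 1 F) (hc : HasCompactSupport F) :
    Integrable (fderiv ℝ F) :=
  (hF.continuous_fderiv (by norm_num)).integrable_of_hasCompactSupport (hc.fderiv ℝ)

lemma integrable_divg {F : Plane → Plane} (hF : ContDiff ℝ 1 F) (hc : HasCompactSupport F) :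
    Integrable (divg F) :=
  traceL.integrable_comp (integrable_fderiv hF hc)

/-- The divergence theorem for compactly supported fields. -/
lemma integral_divg_eq_zero {F : Plane → Plane} (hF : ContDiff ℝ 1 F)
    (hc : HasCompactSupport F) : ∫ x, divg F x = 0 := by
  have hi := integrable_fderiv hF hc
  have h0 : ∫ x, fderiv ℝ F x = 0 := by
    ext1 v
    rw [ContinuousLinearMap.integral_apply hi]
    have := integral_smul_fderiv_eq_neg_fderiv_smul_of_integrable (𝕜 := ℝ) (μ := volume)
      (f := fun _ : Plane => (1 : ℝ)) (g := F) (v := v) (by simp)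
      (by simpa using hi.apply_continuousLinearMap v)
      (by simpa using hF.continuous.integrable_of_hasCompactSupport hc)
      (by intros; fun_prop) (fun x _ => (hF.differentiable (by norm_num)) x)
    simpa using this
  simp_rw [divg_eq_traceL]
  rw [traceL.integral_comp_comm hi, h0, map_zero]

/-! ### Cutoff and perturbation -/

/-- A smooth cutoff removing the unit disc. -/
lemma exists_cutoff : ∃ θ : Plane → ℝ, ContDiff ℝ 1 θ ∧ (∀ x, 0 ≤ θ x) ∧
    (∀ x, ‖x‖ < 1 → θ x = 0) ∧ (∀ x, 2 ≤ ‖x‖ → θ x = 1) ∧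
    HasCompactSupport (fderiv ℝ θ) := by
  have hone : ∀ x : Plane, 2 ≤ ‖x‖ → Real.smoothTransition (‖x‖ ^ 2 - 1) = 1 := fun x hx =>
    Real.smoothTransition.one_of_one_le (by nlinarith)
  refine ⟨fun x => Real.smoothTransition (‖x‖ ^ 2 - 1), ?_, fun x => Real.smoothTransition.nonneg _,
    fun x hx => ?_, hone, ?_⟩
  · exact (Real.smoothTransition.contDiff (n := 1)).comp
      ((contDiff_id.norm_sq ℝ).sub contDiff_const)
  · exact Real.smoothTransition.zero_of_nonpos (by nlinarith [norm_nonneg x])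
  · refine HasCompactSupport.of_support_subset_isCompact
      (isCompact_closedBall (0 : Plane) 2) fun x hx => ?_
    by_contra hx'
    rw [mem_closedBall_zero_iff, not_le] at hx'
    apply hx
    have : (fun x : Plane => Real.smoothTransition (‖x‖ ^ 2 - 1)) =ᶠ[𝓝 x] fun _ => (1 : ℝ) := by
      filter_upwards [continuous_norm.continuousAt.eventually (lt_mem_nhds hx')] with y hy
      exact hone y hy.le
    rw [this.fderiv_eq]
    simp

lemma hasGradientAt_quartic (x : Plane) :
    HasGradientAt (fun y : Plane => ‖y‖ ^ 4) ((4 * ‖x‖ ^ 2) • x) x := by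
  rw [hasGradientAt_iff_hasFDerivAt]
  have h := (hasStrictFDerivAt_norm_sq x).hasFDerivAt.pow 2
  refine (h.congr_fderiv ?_).congr_of_eventuallyEq (.of_forall fun y => ?_)
  · ext v
    simp
    ring
  · ring

lemma flux0_add_const (f : Plane → ℝ) (k : ℝ) : flux0 (fun y => f y + k) = flux0 f := by
  funext y
  simp only [flux0, gradient, fderiv_add_const]

/-- Subtracting `‖x‖⁴` makes a local minimum of `u - φ` at the origin strict without altering the
second order jet of `φ` there, hence without altering the operator at the origin. -/
lemma divg_flux0_perturb {φ : Plane → ℝ} (hφ : ContDiff ℝ 2 φ) :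
    divg (flux0 fun y => φ y - ‖y‖ ^ 4) 0 = divg (flux0 φ) 0 := by
  have hgrad : gradient (fun y => φ y - ‖y‖ ^ 4)
      = fun x => gradient φ x - (4 * ‖x‖ ^ 2) • x := by
    funext x
    have h1 := ((hφ.differentiable (by norm_num)) x).hasGradientAt.hasFDerivAt
    have h2 := (hasGradientAt_quartic x).hasFDerivAt
    have h3 := h1.sub h2
    rw [← map_sub] at h3
    exact (hasGradientAt_iff_hasFDerivAt.2 h3).gradient
  have hg : HasFDerivAt (gradient φ) (fderiv ℝ (gradient φ) 0) 0 :=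
    ((contDiffAt_gradient hφ.contDiffAt).differentiableAt (by norm_num)).hasFDerivAt
  have hp : HasFDerivAt (fun x : Plane => (4 * ‖x‖ ^ 2) • x) (0 : Plane →L[ℝ] Plane) 0 := by
    have h := (((hasStrictFDerivAt_norm_sq (0 : Plane)).hasFDerivAt.const_mul 4).smul
      (hasFDerivAt_id (0 : Plane)))
    refine h.congr_fderiv ?_
    ext v; simp
  have hp' : HasFDerivAt (gradient (fun y => φ y - ‖y‖ ^ 4)) (fderiv ℝ (gradient φ) 0) 0 := by
    rw [hgrad]
    exact (hg.sub hp).congr_fderiv (sub_zero _)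
  have hT : ∀ p, DifferentiableAt ℝ mcField p := contDiff_mcField.differentiable (by norm_num)
  have h0 : gradient (fun y => φ y - ‖y‖ ^ 4) 0 = gradient φ 0 := by rw [hgrad]; simp
  unfold divg
  have e1 : fderiv ℝ (flux0 fun y => φ y - ‖y‖ ^ 4) 0 = _ :=
    ((hT _).hasFDerivAt.comp 0 hp').fderiv
  have e2 : fderiv ℝ (flux0 φ) 0 = _ := ((hT _).hasFDerivAt.comp 0 hg).fderiv
  rw [e1, e2, h0]

/-! ### Comparison in a punctured disc -/

/-- The pointwise estimate behind the comparison argument: the term in which the derivative falls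
on the smooth truncation of `f - u` is nonnegative by monotonicity of `mcField`, so only the
derivative of the cutoff `η` can contribute negatively. -/
lemma divg_test_lower {f u η : Plane → ℝ} {x : Plane} (hf : ContDiffAt ℝ 2 f x)
    (hu : ContDiffAt ℝ 2 u x) (hη : DifferentiableAt ℝ η x) (hη0 : 0 ≤ η x) :
    η x * Real.smoothTransition (f x - u x) * (divg (flux0 f) x - divg (flux0 u) x)
        - 2 * ‖fderiv ℝ η x‖
      ≤ divg (fun y => (η y * Real.smoothTransition (f y - u y)) •
          (flux0 f y - flux0 u y)) x := by
  have hdf : DifferentiableAt ℝ f x := hf.differentiableAt (by norm_num)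
  have hdu : DifferentiableAt ℝ u x := hu.differentiableAt (by norm_num)
  have hVf : DifferentiableAt ℝ (flux0 f) x := (contDiffAt_flux0 hf).differentiableAt (by norm_num)
  have hVu : DifferentiableAt ℝ (flux0 u) x := (contDiffAt_flux0 hu).differentiableAt (by norm_num)
  have hψ : HasDerivAt Real.smoothTransition (deriv Real.smoothTransition (f x - u x))
      (f x - u x) :=
    ((Real.smoothTransition.contDiff (n := 1)).differentiable (by norm_num) _).hasDerivAt
  have hψw : HasFDerivAt (fun y => Real.smoothTransition (f y - u y))
      (deriv Real.smoothTransition (f x - u x) • (fderiv ℝ f x - fderiv ℝ u x)) x :=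
    hψ.comp_hasFDerivAt (f := fun y => f y - u y) x (hdf.hasFDerivAt.sub hdu.hasFDerivAt)
  have hb : HasFDerivAt (fun y => η y * Real.smoothTransition (f y - u y)) _ x :=
    hη.hasFDerivAt.mul hψw
  have hexp := divg_smul (V := fun y => flux0 f y - flux0 u y) hb.differentiableAt (hVf.sub hVu)
  rw [hexp, divg_sub hVf hVu]
  set V := flux0 f x - flux0 u x with hV
  have hVn : ‖V‖ ≤ 2 := by
    have h1 := norm_mcField_le (gradient f x)
    have h2 := norm_mcField_le (gradient u x)
    have h3 : ‖V‖ ≤ ‖flux0 f x‖ + ‖flux0 u x‖ := norm_sub_le _ _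
    rw [flux0_eq, flux0_eq] at h3
    linarith
  have hmono : 0 ≤ (fderiv ℝ f x - fderiv ℝ u x) V := by
    have h := mcField_monotone (gradient f x) (gradient u x)
    rw [real_inner_comm, inner_sub_left, inner_gradient_left, inner_gradient_left] at h
    exact h
  have hψ' : 0 ≤ deriv Real.smoothTransition (f x - u x) :=
    Real.smoothTransition.monotone.deriv_nonneg
  have hcut : |fderiv ℝ η x V| ≤ 2 * ‖fderiv ℝ η x‖ := by
    have h := (fderiv ℝ η x).le_opNorm V
    rw [Real.norm_eq_abs] at h
    nlinarith [norm_nonneg (fderiv ℝ η x)]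
  have hψ0 := Real.smoothTransition.nonneg (f x - u x)
  have hψ1 := Real.smoothTransition.le_one (f x - u x)
  have e : fderiv ℝ (fun y => η y * Real.smoothTransition (f y - u y)) x V
      = η x * (deriv Real.smoothTransition (f x - u x) * (fderiv ℝ f x - fderiv ℝ u x) V)
        + Real.smoothTransition (f x - u x) * fderiv ℝ η x V := by
    rw [hb.fderiv]; rfl
  have hcut' : -(2 * ‖fderiv ℝ η x‖) ≤ Real.smoothTransition (f x - u x) * fderiv ℝ η x V := by
    have h2 : |Real.smoothTransition (f x - u x) * fderiv ℝ η x V| ≤ 2 * ‖fderiv ℝ η x‖ := by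
      rw [abs_mul, abs_of_nonneg hψ0]
      nlinarith [abs_nonneg (fderiv ℝ η x V)]
    exact (abs_le.1 h2).1
  have h3 := mul_nonneg hη0 (mul_nonneg hψ' hmono)
  linarith

/-- Comparison across an isolated singularity: a strict subsolution lying below `u` near the
boundary of a disc lies below `u` in the whole punctured disc. Points have zero capacity for the
estimate because the field is bounded: a cutoff at scale `s` has gradient of `L¹` norm `O(s)`. -/
lemma comparison_punctured {r c : ℝ} (hc : 0 < c) {f u : Plane → ℝ}
    (hf : ContDiff ℝ 2 f) (hu : ∀ x, x ≠ 0 → ‖x‖ < r → ContDiffAt ℝ 2 u x)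
    (hdiv : ∀ x, x ≠ 0 → ‖x‖ < r → divg (flux0 u) x + c ≤ divg (flux0 f) x)
    (hbd : ∀ x, r / 2 ≤ ‖x‖ → ‖x‖ < r → f x ≤ u x)
    (x₀ : Plane) (hx₀ : x₀ ≠ 0) (hx₀r : ‖x₀‖ < r) : f x₀ ≤ u x₀ := by
  by_contra! hlt
  obtain ⟨θ, hθ, hθ0, hθin, hθout, hθc⟩ := exists_cutoff
  have hn₀ : 0 < ‖x₀‖ := norm_pos_iff.2 hx₀
  have hr : 0 < r := hn₀.trans hx₀r
  set m := Real.smoothTransition (f x₀ - u x₀) / 2 with hm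
  have hm0 : 0 < m := half_pos (Real.smoothTransition.pos_of_pos (sub_pos.2 hlt))
  obtain ⟨ρ, hρ, hball⟩ : ∃ ρ > 0, ∀ x ∈ Metric.ball x₀ ρ, ‖x₀‖ / 2 < ‖x‖ ∧ ‖x‖ < r ∧
      m < Real.smoothTransition (f x - u x) := by
    rw [← Metric.eventually_nhds_iff_ball]
    have hcont : ContinuousAt (fun x => Real.smoothTransition (f x - u x)) x₀ :=
      Real.smoothTransition.continuous.continuousAt.comp
        (hf.continuous.continuousAt.sub (hu x₀ hx₀ hx₀r).continuousAt)
    refine (continuous_norm.continuousAt.eventually (lt_mem_nhds (by linarith))).and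
      ((continuous_norm.continuousAt.eventually (gt_mem_nhds hx₀r)).and
      (hcont.eventually (lt_mem_nhds ?_)))
    rw [hm]; linarith
  set I := ∫ x, ‖fderiv ℝ θ x‖ with hI
  have hI0 : 0 ≤ I := integral_nonneg fun _ => norm_nonneg _
  set K := c * m * volume.real (Metric.ball x₀ ρ) with hK
  have hK0 : 0 < K :=
    mul_pos (mul_pos hc hm0) (ENNReal.toReal_pos (Metric.measure_ball_pos _ _ hρ).ne'
      measure_ball_lt_top.ne)
  -- The integrated inequality at scale `s`; letting `s → 0` contradicts `K > 0`.
  have main : ∀ s, 0 < s → s ≤ ‖x₀‖ / 4 → K ≤ 2 * (s * I) := by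
    intro s hs hs4
    set η : Plane → ℝ := fun x => θ (s⁻¹ • x) with hηdef
    have hηC : ContDiff ℝ 1 η := hθ.comp (contDiff_const_smul _)
    have hηd : ∀ x, fderiv ℝ η x = s⁻¹ • fderiv ℝ θ (s⁻¹ • x) := fun x => by
      rw [hηdef, fderiv_comp_smul]
    have hsn : ∀ x : Plane, ‖s⁻¹ • x‖ = ‖x‖ / s := fun x => by
      rw [norm_smul, norm_inv, Real.norm_of_nonneg hs.le, inv_mul_eq_div]
    have hηin : ∀ x, ‖x‖ < s → η x = 0 := fun x hx =>
      hθin _ (by rw [hsn, div_lt_one hs]; exact hx)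
    have hηout : ∀ x, 2 * s ≤ ‖x‖ → η x = 1 := fun x hx =>
      hθout _ (by rw [hsn, le_div_iff₀ hs]; exact hx)
    set P : Plane → Plane := fun y => (η y * Real.smoothTransition (f y - u y)) •
      (flux0 f y - flux0 u y) with hP
    -- The test field, extended by zero outside the disc.
    set G : Plane → Plane := fun y => open Classical in if ‖y‖ < r then P y else 0 with hG
    have hzero_out : ∀ y, r / 2 ≤ ‖y‖ → G y = 0 := by
      intro y hy
      by_cases hyr : ‖y‖ < r
      · simp [hG, hP, hyr, Real.smoothTransition.zero_of_nonpos (sub_nonpos.2 (hbd y hy hyr))]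
      · simp [hG, hyr]
    have hzero_in : ∀ y, ‖y‖ < s → G y = 0 := by
      intro y hy
      simp [hG, hP, hηin y hy]
    have hcases : ∀ x, G =ᶠ[𝓝 x] (fun _ => 0) ∧ (‖x‖ < s ∨ r / 2 < ‖x‖) ∨
        (x ≠ 0 ∧ ‖x‖ < r ∧ G =ᶠ[𝓝 x] P) := by
      intro x
      rcases lt_or_ge ‖x‖ s with h | h
      · left
        refine ⟨?_, .inl h⟩
        filter_upwards [continuous_norm.continuousAt.eventually (gt_mem_nhds h)] with y hy
        exact hzero_in y hy
      rcases lt_or_ge (r / 2) ‖x‖ with h' | h'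
      · left
        refine ⟨?_, .inr h'⟩
        filter_upwards [continuous_norm.continuousAt.eventually (lt_mem_nhds h')] with y hy
        exact hzero_out y hy.le
      · right
        have hxr : ‖x‖ < r := by linarith
        refine ⟨norm_pos_iff.1 (hs.trans_le h), hxr, ?_⟩
        filter_upwards [continuous_norm.continuousAt.eventually (gt_mem_nhds hxr)] with y hy
        simp [hG, hy]
    have hGC : ContDiff ℝ 1 G := by
      rw [contDiff_iff_contDiffAt]
      intro x
      rcases hcases x with ⟨h, -⟩ | ⟨hx, hxr, h⟩
      · exact contDiffAt_const.congr_of_eventuallyEq h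
      · refine ContDiffAt.congr_of_eventuallyEq ?_ h
        have hux := hu x hx hxr
        refine (hηC.contDiffAt.mul ((Real.smoothTransition.contDiffAt (n := 1)).comp x
          ((hf.contDiffAt.sub hux).of_le (by norm_num)))).smul
          ((contDiffAt_flux0 hf.contDiffAt).sub (contDiffAt_flux0 hux))
    have hGc : HasCompactSupport G :=
      HasCompactSupport.of_support_subset_isCompact (isCompact_closedBall (0 : Plane) r)
        fun x hx => by
          rw [mem_closedBall_zero_iff]
          by_contra! h
          exact hx (hzero_out x (by linarith))
    have hNi : Integrable fun x => ‖fderiv ℝ θ (s⁻¹ • x)‖ :=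
      ((((hθ.continuous_fderiv (by norm_num)).integrable_of_hasCompactSupport hθc).comp_smul
        (inv_ne_zero hs.ne')).norm)
    have hpt : ∀ x, (Metric.ball x₀ ρ).indicator (fun _ => c * m) x
        ≤ divg G x + 2 * (s⁻¹ * ‖fderiv ℝ θ (s⁻¹ • x)‖) := by
      intro x
      have hN0 : 0 ≤ 2 * (s⁻¹ * ‖fderiv ℝ θ (s⁻¹ • x)‖) := by positivity
      rcases hcases x with ⟨h, hx⟩ | ⟨hx, hxr, h⟩
      · have hd : divg G x = 0 := by
          rw [divg_eq_traceL, h.fderiv_eq]; simp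
        have hnot : x ∉ Metric.ball x₀ ρ := by
          intro hxb
          obtain ⟨h1, h2, h3⟩ := hball x hxb
          rcases hx with hx | hx
          · linarith
          · rw [Real.smoothTransition.zero_of_nonpos (sub_nonpos.2 (hbd x hx.le h2))] at h3
            linarith
        rw [Set.indicator_of_notMem hnot, hd]
        linarith
      · have hlow := divg_test_lower hf.contDiffAt (hu x hx hxr)
          (hηC.differentiable (by norm_num) x) (hθ0 _)
        have hd : divg G x = divg P x := by
          rw [divg_eq_traceL, divg_eq_traceL, h.fderiv_eq]
        rw [hd]
        rw [hηd, norm_smul, norm_inv, Real.norm_of_nonneg hs.le] at hlow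
        have hgap : c ≤ divg (flux0 f) x - divg (flux0 u) x := by linarith [hdiv x hx hxr]
        have hη0 : 0 ≤ η x := hθ0 _
        have hψ0 := Real.smoothTransition.nonneg (f x - u x)
        have hlow2 : η x * Real.smoothTransition (f x - u x) * c
            ≤ η x * Real.smoothTransition (f x - u x) *
              (divg (flux0 f) x - divg (flux0 u) x) := by gcongr
        by_cases hxb : x ∈ Metric.ball x₀ ρ
        · obtain ⟨h1, h2, h3⟩ := hball x hxb
          rw [Set.indicator_of_mem hxb]
          rw [hηout x (by linarith)] at hlow hlow2
          nlinarith
        · rw [Set.indicator_of_notMem hxb]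
          have : 0 ≤ η x * Real.smoothTransition (f x - u x) * c := by positivity
          linarith
    have hint := integral_mono
      ((integrable_indicator_iff (measurableSet_ball (x := x₀) (ε := ρ))).2
        (integrableOn_const measure_ball_lt_top.ne))
      ((integrable_divg hGC hGc).add ((hNi.const_mul s⁻¹).const_mul 2)) hpt
    rw [integral_indicator measurableSet_ball, setIntegral_const,
      integral_add' (integrable_divg hGC hGc) ((hNi.const_mul s⁻¹).const_mul 2),
      integral_divg_eq_zero hGC hGc, integral_const_mul, integral_const_mul,
      Measure.integral_comp_inv_smul volume (fun x => ‖fderiv ℝ θ x‖) s,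
      finrank_euclideanSpace_fin, abs_of_nonneg (by positivity), ← hI] at hint
    have e : s⁻¹ * (s ^ 2 • I) = s * I := by
      rw [smul_eq_mul]; field_simp
    rw [e, smul_eq_mul] at hint
    rw [hK]; linarith
  set s := min (‖x₀‖ / 4) (K / (2 * I + 1)) with hs
  have hs0 : 0 < s := lt_min (by linarith) (by positivity)
  have h1 := main s hs0 (min_le_left _ _)
  have h2 : s * (2 * I + 1) ≤ K := by
    rw [← le_div_iff₀ (by positivity)]
    exact min_le_right _ _
  linarith

/-! ### Removability -/

/-- **Removability of the isolated singularity in the viscosity supersolution sense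
(Lemma 2.8).** Let `H` be continuous on `B_{1/4}(0) ⊂ ℝ²` and let `u` be bounded and `C²`
on the punctured ball `B_{1/4}(0)∖{0}`, satisfying `−d div(Du/√(1+|Du|²)) = H` there.
Extend `u` to `0` by `u(0) = liminf_{x→0} u(x)`. Then for every `C²` function `φ` such
that `u − φ` attains a local minimum at the origin,
`−d div(Dφ/√(1+|Dφ|²))(0) ≥ H(0)`. -/
theorem stmt_5 (d : ℝ) (hd : 0 < d)
    (H : EuclideanSpace ℝ (Fin 2) → ℝ)
    (hH : ContinuousOn H (Metric.ball 0 (1 / 4)))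
    (u : EuclideanSpace ℝ (Fin 2) → ℝ)
    (U : Set (EuclideanSpace ℝ (Fin 2)))
    (hU : U = Metric.ball 0 (1 / 4) \ {0})
    (hbdd : ∃ M : ℝ, ∀ x ∈ U, |u x| ≤ M)
    (hC2 : ContDiffOn ℝ 2 u U)
    (heq : ∀ x ∈ U, -(d * divg (flux0 u) x) = H x)
    (u0 : ℝ)
    (hu0 : u0 = Filter.liminf u (nhdsWithin 0 {(0 : EuclideanSpace ℝ (Fin 2))}ᶜ))
    (ue : EuclideanSpace ℝ (Fin 2) → ℝ)
    (hue0 : ue 0 = u0) (hue : ∀ x ≠ (0 : EuclideanSpace ℝ (Fin 2)), ue x = u x)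
    (φ : EuclideanSpace ℝ (Fin 2) → ℝ) (hφ : ContDiff ℝ 2 φ)
    (hmin : IsLocalMin (fun y => ue y - φ y) 0) :
    -(d * divg (flux0 φ) 0) ≥ H 0 := by
  subst hU
  obtain ⟨M, hM⟩ := hbdd
  by_contra! hneg
  set f : Plane → ℝ := fun y => φ y - ‖y‖ ^ 4 with hf
  have hnorm4 : ContDiff ℝ 2 fun y : Plane => ‖y‖ ^ 4 := by
    have h := ((contDiff_id (𝕜 := ℝ) (E := Plane) (n := 2)).norm_sq ℝ).pow 2
    have e : (fun y : Plane => ‖y‖ ^ 4) = fun y => (‖id y‖ ^ 2) ^ 2 := by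
      funext y; simp only [id]; ring
    rw [e]; exact h
  have hfC : ContDiff ℝ 2 f := hφ.sub hnorm4
  have hdiv0 : divg (flux0 f) 0 = divg (flux0 φ) 0 := divg_flux0_perturb hφ
  set v := d * divg (flux0 f) 0 + H 0 with hv
  have hv0 : 0 < v := by rw [hv, hdiv0]; linarith
  have hcont : ContinuousAt (fun x => d * divg (flux0 f) x + H x) 0 :=
    ((continuousAt_divg (contDiffAt_flux0 hfC.contDiffAt)).const_mul d).add
      (hH.continuousAt (Metric.ball_mem_nhds 0 (by norm_num)))
  obtain ⟨r₀, hr₀, hball⟩ := Metric.eventually_nhds_iff_ball.1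
    ((hcont.eventually (lt_mem_nhds (half_lt_self hv0))).and hmin)
  set r := min r₀ (1 / 4) with hr
  have hrpos : 0 < r := lt_min hr₀ (by norm_num)
  have hU : ∀ x : Plane, x ≠ 0 → ‖x‖ < r → x ∈ Metric.ball (0 : Plane) (1 / 4) \ {0} :=
    fun x hx hxr => ⟨mem_ball_zero_iff.2 (hxr.trans_le (min_le_right _ _)), hx⟩
  have hnear : ∀ x : Plane, ‖x‖ < r → v / 2 < d * divg (flux0 f) x + H x ∧
      ue 0 - φ 0 ≤ ue x - φ x :=
    fun x hxr => hball x (mem_ball_zero_iff.2 (hxr.trans_le (min_le_left _ _)))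
  have hopen : IsOpen (Metric.ball (0 : Plane) (1 / 4) \ {0}) :=
    Metric.isOpen_ball.sdiff isClosed_singleton
  -- With this height the raised test function stays below `u` on `r / 2 ≤ ‖x‖ < r`.
  set δ := (r / 2) ^ 4 with hδ
  have hδ0 : 0 < δ := by positivity
  have hcmp : ∀ x : Plane, x ≠ 0 → ‖x‖ < r → f x + (u0 - φ 0 + δ) ≤ u x := by
    refine comparison_punctured (c := v / (2 * d)) (by positivity) (hfC.add contDiff_const)
      (fun x hx hxr => hC2.contDiffAt (hopen.mem_nhds (hU x hx hxr))) ?_ ?_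
    · intro x hx hxr
      have h1 := heq x (hU x hx hxr)
      have h2 := (hnear x hxr).1
      rw [flux0_add_const]
      have h3 : v / (2 * d) = v / 2 / d := by field_simp
      rw [h3, ← le_sub_iff_add_le', div_le_iff₀ hd]
      nlinarith
    · intro x hx hxr
      have hx0 : x ≠ 0 := norm_pos_iff.1 (by linarith)
      have h2 := (hnear x hxr).2
      rw [hue x hx0, hue0] at h2
      have h4 : δ ≤ ‖x‖ ^ 4 := by rw [hδ]; gcongr
      simp only [hf]
      linarith
  have hev : ∀ᶠ x in 𝓝[≠] (0 : Plane), x ≠ 0 ∧ ‖x‖ < r :=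
    eventually_mem_nhdsWithin.and (nhdsWithin_le_nhds
      (continuous_norm.continuousAt.eventually (gt_mem_nhds (by simpa using hrpos))))
  have hf0 : ∀ᶠ x in 𝓝[≠] (0 : Plane), φ 0 - δ / 2 < f x := by
    refine nhdsWithin_le_nhds (hfC.continuous.continuousAt.eventually (lt_mem_nhds ?_))
    simp only [hf, norm_zero]
    linarith
  have hbdd : IsBoundedUnder (· ≤ ·) (𝓝[≠] (0 : Plane)) u :=
    isBoundedUnder_of_eventually_le (a := M) (hev.mono fun x hx =>
      (abs_le.1 (hM x (hU x hx.1 hx.2))).2)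
  have hle : u0 + δ / 2 ≤ liminf u (𝓝[≠] (0 : Plane)) := by
    refine le_liminf_of_le hbdd.isCoboundedUnder_ge ?_
    filter_upwards [hev, hf0] with x hx hx'
    linarith [hcmp x hx.1 hx.2]
  rw [← hu0] at hle
  linarith
end

section
/- Let n ≥ 2, d > 0, and 0 < r₀ ≤ (1/8)·min{1, d}. Then there exists no continuous function g : [r₀, 3r₀] → ℝ with g(2r₀) − g(r₀) > 1 that is a viscosity supersolution of √(1 + (g')²) − d(g''/(1 + (g')²) + (n−1)g'/r) ≥ 1 on the interval (r₀, 3r₀). -/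
/-!
Where `0 < p = l'` and `r ≤ 2r₀`, the bounds `√(1+p²) ≤ 1 + p` and `d ≥ 8r₀` make the curvature
term `d(n-1)p/r ≥ 4p` dominate, so a supersolution must be strongly concave where it increases.
Written for the inverse function `r = h(y)`, with `p = 1/h'` and `l'' = -h''/h'³`, it is enough
that `h' > 0` and `0 ≤ h'' ≤ 27r₀/2` for the inverse of `h` to be a strict subsolution
(`operator_lt_one`).

The barrier is the inverse `L` of `h(y) = r₀ + ηy + 3r₀ (y - 1/4)₊³` (`profile`). It leaves `r₀`
with slope `1/η`, so that `L(r₀) = 0` and `L(r₀ + η/4) = 1/4`, and then bends so that `L(2r₀) ≤ 1`.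
If `g` climbs by more than `1` on `[r₀, 2r₀]`, then `g - L` is larger at `2r₀` than at `r₀`. By
continuity of `g` at `r₀`, for small `η` it is smaller at `r₀ + η/4` than at `r₀`. Hence its
minimum over `[r₀, 2r₀]` is interior, and testing the supersolution property with `L` there
contradicts strictness.
-/

lemma hasDerivAt_mul_abs (x : ℝ) : HasDerivAt (fun x : ℝ => x * |x|) (2 * |x|) x := by
  rcases lt_trichotomy x 0 with hx | rfl | hx
  · have h : HasDerivAt (fun x : ℝ => -(x * x)) (-(1 * x + x * 1)) x :=
      ((hasDerivAt_id x).mul (hasDerivAt_id x)).neg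
    refine (h.congr_of_eventuallyEq ?_).congr_deriv ?_
    · filter_upwards [gt_mem_nhds hx] with z hz
      rw [abs_of_neg hz]; ring
    · rw [abs_of_neg hx]; ring
  · rw [hasDerivAt_iff_tendsto_slope_zero]
    have h : Filter.Tendsto (fun t : ℝ => |t|) (nhdsWithin 0 {0}ᶜ) (nhds 0) := by
      have := (continuous_abs (G := ℝ)).tendsto 0
      rw [abs_zero] at this
      exact this.mono_left nhdsWithin_le_nhds
    simp only [abs_zero, mul_zero]
    refine h.congr' ?_
    filter_upwards [self_mem_nhdsWithin] with t ht
    have : t ≠ 0 := ht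
    simp [this]
  · have h : HasDerivAt (fun x : ℝ => x * x) (1 * x + x * 1) x :=
      (hasDerivAt_id x).mul (hasDerivAt_id x)
    refine (h.congr_of_eventuallyEq ?_).congr_deriv ?_
    · filter_upwards [lt_mem_nhds hx] with z hz
      rw [abs_of_pos hz]
    · rw [abs_of_pos hx]; ring

/-- The inverse barrier `h(y) = r₀ + ηy + 3r₀ (y - 1/4)₊³`. The cube of the positive part of `x`
is written `(x³ + x·(x|x|))/2`. -/
noncomputable def profile (r₀ η y : ℝ) : ℝ :=
  r₀ + η * y + 3 * r₀ * (((y - 1 / 4) ^ 3 + (y - 1 / 4) * ((y - 1 / 4) * |y - 1 / 4|)) / 2)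

/-- The first derivative of `profile` in `y`, namely `η + 9r₀ (y - 1/4)₊²`. -/
noncomputable def profile' (r₀ η y : ℝ) : ℝ :=
  η + 9 * r₀ * (((y - 1 / 4) ^ 2 + (y - 1 / 4) * |y - 1 / 4|) / 2)

/-- The second derivative of `profile` in `y`, namely `18r₀ (y - 1/4)₊`. -/
noncomputable def profile'' (r₀ y : ℝ) : ℝ :=
  9 * r₀ * ((y - 1 / 4) + |y - 1 / 4|)

lemma hasDerivAt_profile (r₀ η y : ℝ) : HasDerivAt (profile r₀ η) (profile' r₀ η y) y := by
  have hx : HasDerivAt (fun y : ℝ => y - 1 / 4) 1 y := (hasDerivAt_id y).sub_const _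
  have ha : HasDerivAt (fun y : ℝ => (y - 1 / 4) * |y - 1 / 4|) (2 * |y - 1 / 4| * 1) y :=
    HasDerivAt.comp (h₂ := fun x : ℝ => x * |x|) y (hasDerivAt_mul_abs (y - 1 / 4)) hx
  have h := (((hasDerivAt_id y).const_mul η).const_add r₀).add
    ((((hx.pow 3).add (hx.mul ha)).div_const 2).const_mul (3 * r₀))
  refine h.congr_deriv ?_
  simp only [profile']
  push_cast
  ring

lemma hasDerivAt_profile' (r₀ η y : ℝ) : HasDerivAt (profile' r₀ η) (profile'' r₀ y) y := by
  have hx : HasDerivAt (fun y : ℝ => y - 1 / 4) 1 y := (hasDerivAt_id y).sub_const _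
  have ha : HasDerivAt (fun y : ℝ => (y - 1 / 4) * |y - 1 / 4|) (2 * |y - 1 / 4| * 1) y :=
    HasDerivAt.comp (h₂ := fun x : ℝ => x * |x|) y (hasDerivAt_mul_abs (y - 1 / 4)) hx
  have h := ((((hx.pow 2).add ha).div_const 2).const_mul (9 * r₀)).const_add η
  refine h.congr_deriv ?_
  simp only [profile'']
  push_cast
  ring

lemma contDiff_profile (r₀ η : ℝ) : ContDiff ℝ 2 (profile r₀ η) := by
  have h1 : deriv (profile r₀ η) = profile' r₀ η := funext fun y => (hasDerivAt_profile r₀ η y).deriv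
  have h2 : deriv (profile' r₀ η) = profile'' r₀ := funext fun y => (hasDerivAt_profile' r₀ η y).deriv
  have h3 : ContDiff ℝ 1 (profile' r₀ η) := by
    rw [contDiff_one_iff_deriv, h2]
    refine ⟨fun y => (hasDerivAt_profile' r₀ η y).differentiableAt, ?_⟩
    unfold profile''
    fun_prop
  rw [show (2 : WithTop ℕ∞) = 1 + 1 by norm_num, contDiff_succ_iff_deriv, h1]
  exact ⟨fun y => (hasDerivAt_profile r₀ η y).differentiableAt, by simp, h3⟩

lemma le_profile' {r₀ : ℝ} (hr : 0 < r₀) (η y : ℝ) : η ≤ profile' r₀ η y := by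
  have : 0 ≤ (y - 1 / 4) ^ 2 + (y - 1 / 4) * |y - 1 / 4| := by
    nlinarith [neg_abs_le (y - 1 / 4), sq_abs (y - 1 / 4), abs_nonneg (y - 1 / 4)]
  unfold profile'
  have : 0 ≤ 9 * r₀ * (((y - 1 / 4) ^ 2 + (y - 1 / 4) * |y - 1 / 4|) / 2) := by positivity
  linarith

lemma strictMono_profile {r₀ η : ℝ} (hr : 0 < r₀) (hη : 0 < η) : StrictMono (profile r₀ η) :=
  strictMono_of_deriv_pos fun y => by
    rw [(hasDerivAt_profile r₀ η y).deriv]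
    exact hη.trans_le (le_profile' hr η y)

lemma surjective_profile {r₀ η : ℝ} (hr : 0 < r₀) (hη : 0 < η) :
    Function.Surjective (profile r₀ η) := by
  have hmono : Monotone fun y => profile r₀ η y - η * y := by
    refine monotone_of_deriv_nonneg (fun y => ?_) fun y => ?_
    · exact ((hasDerivAt_profile r₀ η y).sub
        ((hasDerivAt_id y).const_mul η)).differentiableAt
    · have h : HasDerivAt (fun y => profile r₀ η y - η * y) (profile' r₀ η y - η * 1) y :=
        (hasDerivAt_profile r₀ η y).sub ((hasDerivAt_id y).const_mul η)
      rw [h.deriv]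
      linarith [le_profile' hr η y]
  have htop : Filter.Tendsto (fun y : ℝ => profile r₀ η 0 + η * y) Filter.atTop Filter.atTop :=
    Filter.tendsto_atTop_add_const_left _ _ (Filter.tendsto_id.const_mul_atTop hη)
  have hbot : Filter.Tendsto (fun y : ℝ => profile r₀ η 0 + η * y) Filter.atBot Filter.atBot :=
    Filter.tendsto_atBot_add_const_left _ _ (Filter.tendsto_id.const_mul_atBot hη)
  refine (contDiff_profile r₀ η).continuous.surjective
    (Filter.tendsto_atTop_mono' _ ?_ htop) (Filter.tendsto_atBot_mono' _ ?_ hbot)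
  · filter_upwards [Filter.eventually_ge_atTop 0] with y hy
    have := hmono hy
    simp only [mul_zero] at this
    linarith
  · filter_upwards [Filter.eventually_le_atBot 0] with y hy
    have := hmono hy
    simp only [mul_zero] at this
    linarith

/-- The strict subsolution inequality for the inverse of a function `h`, at a point where
`h' = q` and `h'' = H`. -/
lemma operator_lt_one {n : ℕ} (hn : 2 ≤ n) {d r₀ r q H : ℝ} (hd : 8 * r₀ ≤ d) (hr₀ : 0 < r₀)
    (hr₀' : r₀ ≤ 1 / 8) (hr : 0 < r) (hr' : r ≤ 2 * r₀) (hq : 0 < q) (hH : 0 ≤ H)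
    (hH' : H ≤ 27 / 2 * r₀) :
    Real.sqrt (1 + (q⁻¹) ^ 2)
      - d * (-(H * q⁻¹) / q ^ 2 / (1 + (q⁻¹) ^ 2) + ((n : ℝ) - 1) * q⁻¹ / r) < 1 := by
  obtain ⟨p, hp, rfl⟩ : ∃ p : ℝ, 0 < p ∧ q = p⁻¹ := ⟨q⁻¹, inv_pos.2 hq, (inv_inv q).symm⟩
  rw [inv_inv]
  have hn' : (2 : ℝ) ≤ n := by exact_mod_cast hn
  have h1 : Real.sqrt (1 + p ^ 2) ≤ 1 + p := by
    rw [Real.sqrt_le_left (by positivity)]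
    nlinarith
  have h2 : -(H * p) ≤ -(H * p) / p⁻¹ ^ 2 / (1 + p ^ 2) := by
    rw [inv_pow, div_inv_eq_mul, le_div_iff₀ (by positivity)]
    nlinarith [mul_nonneg hH hp.le]
  have h3 : 4 * p / (8 * r₀) ≤ ((n : ℝ) - 1) * p / r := by
    rw [div_le_div_iff₀ (by positivity) hr]
    nlinarith [mul_pos hp hr₀, mul_le_mul_of_nonneg_left hr' hp.le,
      mul_nonneg (mul_pos hp hr₀).le (sub_nonneg.2 hn')]
  -- Since `r₀ ≤ 1/8`, the concavity term uses up less than half of the curvature term.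
  have h4 : 2 * p / (8 * r₀) ≤ 4 * p / (8 * r₀) - H * p := by
    have : H * p ≤ 2 * p / (8 * r₀) := by
      rw [le_div_iff₀ (by positivity)]
      have : H * (8 * r₀) ≤ 2 := by nlinarith
      nlinarith
    have e : 4 * p / (8 * r₀) = 2 * p / (8 * r₀) + 2 * p / (8 * r₀) := by ring
    linarith
  have h5 : 2 * p ≤ d * (2 * p / (8 * r₀)) := by
    rw [mul_div_assoc', le_div_iff₀ (by positivity)]
    nlinarith
  have h6 : d * (2 * p / (8 * r₀)) ≤
      d * (-(H * p) / p⁻¹ ^ 2 / (1 + p ^ 2) + ((n : ℝ) - 1) * p / r) :=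
    mul_le_mul_of_nonneg_left (by linarith) (by linarith)
  linarith


/-- **Nonexistence of fast-climbing radial supersolutions (radial core of Lemma 2.2).**
Let `n ≥ 2`, `d > 0`, `0 < r₀ ≤ (1/8)min{1, d}`. There is no continuous
`g : [r₀, 3r₀] → ℝ` with `g(2r₀) − g(r₀) > 1` that is a viscosity supersolution of
`√(1+(g')²) − d(g''/(1+(g')²) + (n−1)g'/r) ≥ 1` on `(r₀, 3r₀)`, i.e. such that for every
`C²` test function `l` touching `g` from below (meaning `g − l` has a local minimum
relative to `[r₀, 3r₀]`) at `r̄ ∈ (r₀, 3r₀)`, one has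
`√(1+l'(r̄)²) − d(l''(r̄)/(1+l'(r̄)²) + (n−1)l'(r̄)/r̄) ≥ 1`. -/
theorem stmt_14 (n : ℕ) (hn : 2 ≤ n) (d r₀ : ℝ) (hd : 0 < d)
    (hr₀pos : 0 < r₀) (hr₀ : r₀ ≤ min 1 d / 8) :
    ¬ ∃ g : ℝ → ℝ,
      ContinuousOn g (Set.Icc r₀ (3 * r₀)) ∧
      g (2 * r₀) - g r₀ > 1 ∧
      (∀ l : ℝ → ℝ, ContDiff ℝ 2 l →
        ∀ rbar ∈ Set.Ioo r₀ (3 * r₀),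
          IsLocalMinOn (fun r => g r - l r) (Set.Icc r₀ (3 * r₀)) rbar →
          Real.sqrt (1 + (deriv l rbar) ^ 2)
            - d * (deriv (deriv l) rbar / (1 + (deriv l rbar) ^ 2)
              + ((n : ℝ) - 1) * deriv l rbar / rbar) ≥ 1) := by
  rintro ⟨g, hg, hclimb, hsuper⟩
  have hr1 : r₀ ≤ 1 / 8 := by linarith [min_le_left 1 d]
  have hrd : 8 * r₀ ≤ d := by linarith [min_le_right 1 d]
  -- Continuity at `r₀` fixes the steepness: `g` climbs by less than `1/4` from `r₀` to `r₀ + η/4`.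
  obtain ⟨η, hη, hηr, hgη⟩ : ∃ η : ℝ, 0 < η ∧ η ≤ r₀ ∧ g (r₀ + η / 4) < g r₀ + 1 / 4 := by
    obtain ⟨ε, hε, h⟩ := Metric.continuousOn_iff.1 hg r₀ ⟨le_rfl, by linarith⟩ (1 / 4) (by norm_num)
    have hm : 0 < min ε r₀ := lt_min hε hr₀pos
    have hmε := min_le_left ε r₀
    have hmr := min_le_right ε r₀
    refine ⟨min ε r₀, hm, hmr, ?_⟩
    have := h (r₀ + min ε r₀ / 4) ⟨by linarith, by linarith⟩ (by
      rw [Real.dist_eq, add_sub_cancel_left, abs_of_pos (by positivity)]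
      linarith)
    rw [Real.dist_eq] at this
    linarith [(abs_lt.1 this).2]
  have hmono := strictMono_profile hr₀pos hη
  let e : ℝ ≃ₜ ℝ := (hmono.orderIsoOfSurjective _ (surjective_profile hr₀pos hη)).toHomeomorph
  have hpos : ∀ y, 0 < profile' r₀ η y := fun y => hη.trans_le (le_profile' hr₀pos η y)
  let L : ℝ → ℝ := fun r => e.symm r
  have hprof : ∀ r, profile r₀ η (L r) = r := fun r => e.apply_symm_apply r
  have hLprof : ∀ y, L (profile r₀ η y) = y := fun y => e.symm_apply_apply y
  have hLC : ContDiff ℝ 2 L :=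
    e.contDiff_symm_deriv (fun y => (hpos y).ne') (hasDerivAt_profile r₀ η) (contDiff_profile r₀ η)
  have hLd : ∀ r, HasDerivAt L (profile' r₀ η (L r))⁻¹ r := fun r =>
    (hasDerivAt_profile r₀ η (L r)).of_local_left_inverse hLC.continuous.continuousAt
      (hpos _).ne' (Filter.Eventually.of_forall hprof)
  have hLd1 : deriv L = fun r => (profile' r₀ η (L r))⁻¹ := funext fun r => (hLd r).deriv
  have hLd2 : ∀ r, deriv (deriv L) r =
      -(profile'' r₀ (L r) * (profile' r₀ η (L r))⁻¹) / (profile' r₀ η (L r)) ^ 2 := by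
    intro r
    rw [hLd1]
    exact (((hasDerivAt_profile' r₀ η (L r)).comp r (hLd r)).inv (hpos _).ne').deriv
  have p0 : profile r₀ η 0 = r₀ := by
    have : |(0 : ℝ) - 1 / 4| = 1 / 4 := by rw [abs_of_neg] <;> norm_num
    rw [profile, this]; ring
  have ps : profile r₀ η (1 / 4) = r₀ + η / 4 := by
    rw [profile, sub_self]; ring
  have p1 : 2 * r₀ ≤ profile r₀ η 1 := by
    have : |(1 : ℝ) - 1 / 4| = 3 / 4 := by rw [abs_of_pos] <;> norm_num
    rw [profile, this]; nlinarith
  have L0 : L r₀ = 0 := by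
    conv_lhs => rw [← p0]
    exact hLprof 0
  have Ls : L (r₀ + η / 4) = 1 / 4 := by rw [← ps, hLprof]
  have L1 : L (2 * r₀) ≤ 1 := by
    rw [← hmono.le_iff_le, hprof]; exact p1
  obtain ⟨r, hr, hmin⟩ := isCompact_Icc.exists_isMinOn (Set.nonempty_Icc.2 (by linarith))
    ((hg.mono (Set.Icc_subset_Icc_right (by linarith : 2 * r₀ ≤ 3 * r₀))).sub
      hLC.continuous.continuousOn)
  rw [isMinOn_iff] at hmin
  have hs : g r - L r ≤ g (r₀ + η / 4) - L (r₀ + η / 4) :=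
    hmin _ ⟨by linarith, by linarith⟩
  rw [Ls] at hs
  have hr0 : r₀ < r := by
    refine lt_of_le_of_ne hr.1 ?_
    rintro rfl
    rw [L0] at hs
    linarith
  have hr2 : r < 2 * r₀ := by
    refine lt_of_le_of_ne hr.2 ?_
    rintro rfl
    linarith
  have hloc : IsLocalMinOn (fun r => g r - L r) (Set.Icc r₀ (3 * r₀)) r := by
    refine Filter.Eventually.filter_mono nhdsWithin_le_nhds ?_
    filter_upwards [Icc_mem_nhds hr0 hr2] with z hz
    exact hmin z hz
  have hLr : L r < 1 := by
    rw [← hmono.lt_iff_lt, hprof]; linarith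
  have key := hsuper L hLC r ⟨hr0, by linarith⟩ hloc
  have hH : 0 ≤ profile'' r₀ (L r) := by
    have := neg_abs_le (L r - 1 / 4)
    exact mul_nonneg (by positivity) (by linarith)
  have hH' : profile'' r₀ (L r) ≤ 27 / 2 * r₀ := by
    have : (L r - 1 / 4) + |L r - 1 / 4| ≤ 3 / 2 := by
      rcases abs_cases (L r - 1 / 4) with h | h <;> linarith
    unfold profile''
    nlinarith
  rw [hLd2, hLd1] at key
  exact absurd key (not_le.2 (operator_lt_one hn hrd hr₀pos hr1 (by linarith) hr2.le
    (hpos (L r)) hH hH'))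
end
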